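/- If H is a hypergraph on n vertices that contains no isolated vertices and in which every edge has at least three vertices, then γ_g(H) ≤ (5/9)·n. -/

import Mathlib

attribute [local instance 10] Classical.propDecidable

variable {V : Type}

/-- The closed neighborhood of a vertex in a hypergraph given by its edge set. -/
noncomputable def closedNbhd [Fintype V] (H : Finset (Finset V)) (v : V) : Finset V :=
  Finset.univ.filter (fun u => u = v ∨ ∃ e ∈ H, u ∈ e ∧ v ∈ e)

private lemma card_sdiff_union_lt [Fintype V] {S T : Finset V} (h : ¬ T ⊆ S) :
    (Finset.univ \ (S ∪ T)).card < (Finset.univ \ S).card := by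
  classical
  obtain ⟨u, huT, huS⟩ := Finset.not_subset.mp h
  apply Finset.card_lt_card
  rw [Finset.ssubset_def]
  constructor
  · exact Finset.sdiff_subset_sdiff (Finset.Subset.refl _) Finset.subset_union_left
  · intro hc
    have hu : u ∈ Finset.univ \ S := by simp [huS]
    have := hc hu
    simp [huT] at this

/-- Value of the domination game on a hypergraph: `S` is the set of vertices already
dominated, `dom = true` iff Dominator is the next player to move.  A legal move is a vertex
dominating at least one new vertex; Dominator minimizes, Staller maximizes the total
number of moves, and both play optimally. -/
noncomputable def domGameVal [Fintype V] (H : Finset (Finset V)) (dom : Bool) (S : Finset V) :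
    ℕ :=
  if h : (Finset.univ.filter fun v => ¬ closedNbhd H v ⊆ S).Nonempty then
    1 + (if dom then
        (Finset.univ.filter fun v => ¬ closedNbhd H v ⊆ S).attach.inf'
          (Finset.attach_nonempty_iff.mpr h)
          (fun v => domGameVal H false (S ∪ closedNbhd H v.1))
      else
        (Finset.univ.filter fun v => ¬ closedNbhd H v ⊆ S).attach.sup'
          (Finset.attach_nonempty_iff.mpr h)
          (fun v => domGameVal H true (S ∪ closedNbhd H v.1)))
  else 0
termination_by (Finset.univ \ S).card
decreasing_by
  · exact card_sdiff_union_lt (Finset.mem_filter.mp v.2).2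
  · exact card_sdiff_union_lt (Finset.mem_filter.mp v.2).2

/-- The game domination number (Dominator starts). -/
noncomputable def gammaGame [Fintype V] (H : Finset (Finset V)) : ℕ :=
  domGameVal H true ∅

/-!
Assign weight `15` to each undominated vertex and, to each dominated vertex, a weight at most `9`
that depends on its residual degree, the number of undominated vertices in its neighborhood, and
vanishes with it. The total weight starts at `15 n`. In every position Dominator has a move that
lowers it by at least `27` and, together with any reply of Staller, by at least `54`; hence
`27 γ_g ≤ 15 n`.

Dominator attacks the largest residual degrees first. The fewer large residual degrees remain, the
more every reply of Staller costs, so the less Dominator's own move has to gain. The hypothesis on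
the edges enters through triangles: an undominated neighbor `q` of the played vertex `x` shares a
third vertex with `x`, and either that vertex is undominated as well, or it is dominated and its
own loss of weight can be charged to `q`.
-/

section Potential

open Finset

variable {α : Type*} {N : α → Finset α} {b : ℕ → ℕ} {S T : Finset α} {x v : α}

/-- `N` assigns to each vertex its closed neighborhood in a graph without isolated vertices in
which every edge lies in a triangle. -/
structure IsTriangular (N : α → Finset α) : Prop where
  mem_self (v : α) : v ∈ N v
  symm {u v : α} : u ∈ N v → v ∈ N u
  exists_ne (v : α) : ∃ u ∈ N v, u ≠ v
  exists_common {u v : α} : u ∈ N v → u ≠ v → ∃ w ∈ N u, w ∈ N v ∧ w ≠ u ∧ w ≠ v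

/-- The residual degree of `v`: the number of vertices of `N v` not yet dominated. -/
noncomputable def residualDegree (N : α → Finset α) (S : Finset α) (v : α) : ℕ :=
  #(N v \ S)

/-- The vertices of `N v` that become dominated when `x` is played. -/
noncomputable def freshNbhd (N : α → Finset α) (S : Finset α) (x v : α) : Finset α :=
  (N v ∩ N x) \ S

/-- The weight of `v` in the position with dominated set `S`: an undominated (white) vertex weighs
`15`, a dominated one weighs `b d`, where `d` is its residual degree. -/
noncomputable def vertexWeight (N : α → Finset α) (b : ℕ → ℕ) (S : Finset α) (v : α) : ℕ :=
  if v ∈ S then b (residualDegree N S v) else 15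

/-- The loss of weight of `v` when `x` is played. -/
noncomputable def vertexGain (N : α → Finset α) (b : ℕ → ℕ) (S : Finset α) (x v : α) : ℕ :=
  vertexWeight N b S v - vertexWeight N b (S ∪ N x) v

/-- The total weight of the position with dominated set `S`. -/
noncomputable def potential [Fintype α] (N : α → Finset α) (b : ℕ → ℕ) (S : Finset α) : ℕ :=
  ∑ v, vertexWeight N b S v

/-- The loss of total weight when `x` is played. -/
noncomputable def moveGain [Fintype α] (N : α → Finset α) (b : ℕ → ℕ) (S : Finset α) (x : α) : ℕ :=
  ∑ v, vertexGain N b S x v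

/-- The admissible weights of dominated vertices as functions of the residual degree. The bound `9`
makes every newly dominated vertex lose at least `6`. -/
structure IsDominatedWeight (b : ℕ → ℕ) : Prop where
  monotone : Monotone b
  zero : b 0 = 0
  le_nine (k : ℕ) : b k ≤ 9

lemma mem_freshNbhd {t : α} : t ∈ freshNbhd N S x v ↔ t ∈ N v ∧ t ∈ N x ∧ t ∉ S := by
  simp only [freshNbhd, mem_sdiff, mem_inter, and_assoc]

lemma residualDegree_anti (h : S ⊆ T) (v : α) : residualDegree N T v ≤ residualDegree N S v :=
  card_le_card (sdiff_subset_sdiff subset_rfl h)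

lemma residualDegree_pos_iff : 0 < residualDegree N S v ↔ ¬ N v ⊆ S := by
  rw [residualDegree, card_pos, sdiff_nonempty]

lemma residualDegree_union :
    residualDegree N (S ∪ N x) v = residualDegree N S v - #(freshNbhd N S x v) := by
  have hsub : freshNbhd N S x v ⊆ N v \ S := sdiff_subset_sdiff inter_subset_left subset_rfl
  rw [residualDegree, residualDegree, ← card_sdiff_of_subset hsub]
  congr 1
  ext t
  simp only [mem_sdiff, mem_union, mem_freshNbhd]
  tauto

lemma card_freshNbhd_le_residualDegree : #(freshNbhd N S x v) ≤ residualDegree N S v :=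
  card_le_card (sdiff_subset_sdiff inter_subset_left subset_rfl)

lemma freshNbhd_self : freshNbhd N S x x = N x \ S := by
  rw [freshNbhd, inter_self]

lemma residualDegree_union_self : residualDegree N (S ∪ N x) x = 0 := by
  rw [residualDegree_union, freshNbhd_self, residualDegree, Nat.sub_self]

lemma vertexWeight_anti (hb : IsDominatedWeight b) (h : S ⊆ T) (v : α) :
    vertexWeight N b T v ≤ vertexWeight N b S v := by
  unfold vertexWeight
  split_ifs with hT hS hS
  · exact hb.monotone (residualDegree_anti h v)
  · exact (hb.le_nine _).trans (by norm_num)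
  · exact absurd (h hS) hT
  · exact le_rfl

lemma vertexGain_of_mem (hv : v ∈ S) :
    vertexGain N b S x v =
      b (residualDegree N S v) - b (residualDegree N S v - #(freshNbhd N S x v)) := by
  rw [vertexGain, vertexWeight, vertexWeight, if_pos hv, if_pos (mem_union_left _ hv),
    residualDegree_union]

lemma sub_le_vertexGain_of_notMem (hb : IsDominatedWeight b) (hv : v ∉ S) (hvx : v ∈ N x) {k : ℕ}
    (hk : residualDegree N S v ≤ #(freshNbhd N S x v) + k) : 15 - b k ≤ vertexGain N b S x v := by
  rw [vertexGain, vertexWeight, vertexWeight, if_neg hv, if_pos (mem_union_right _ hvx),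
    residualDegree_union]
  exact Nat.sub_le_sub_left (hb.monotone (by omega)) 15

lemma six_le_vertexGain_of_notMem (hb : IsDominatedWeight b) (hv : v ∉ S) (hvx : v ∈ N x) :
    6 ≤ vertexGain N b S x v := by
  have hgain := sub_le_vertexGain_of_notMem hb hv hvx (Nat.le_add_left (residualDegree N S v) _)
  have hle := hb.le_nine (residualDegree N S v)
  omega

lemma vertexGain_self (hN : IsTriangular N) (hb : IsDominatedWeight b) :
    vertexGain N b S x x = vertexWeight N b S x := by
  rw [vertexGain, vertexWeight.eq_def N b (S ∪ N x), if_pos (mem_union_right _ (hN.mem_self x)),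
    residualDegree_union_self, hb.zero, Nat.sub_zero]

lemma card_sdiff_erase_of_mem (hx : x ∈ S) : #((N x \ S).erase x) = residualDegree N S x := by
  rw [erase_eq_of_notMem fun h => (mem_sdiff.1 h).2 hx, residualDegree]

lemma card_sdiff_erase_of_notMem (hN : IsTriangular N) (hx : x ∉ S) :
    #((N x \ S).erase x) + 1 = residualDegree N S x :=
  card_erase_add_one (mem_sdiff.2 ⟨hN.mem_self x, hx⟩)

variable [Fintype α]

lemma potential_union_add_moveGain (hb : IsDominatedWeight b) :
    potential N b (S ∪ N x) + moveGain N b S x = potential N b S := by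
  rw [potential, moveGain, ← sum_add_distrib]
  exact sum_congr rfl fun v _ => Nat.add_sub_cancel' (vertexWeight_anti hb subset_union_left v)

lemma sum_vertexGain_le_moveGain (A : Finset α) :
    ∑ v ∈ A, vertexGain N b S x v ≤ moveGain N b S x :=
  sum_le_sum_of_subset (subset_univ A)

lemma not_subset_of_moveGain_pos (h : 0 < moveGain N b S x) : ¬ N x ⊆ S := by
  intro hx
  simp [moveGain, vertexGain, union_eq_left.2 hx] at h

lemma weight_add_sum_add_sum_le_moveGain (hN : IsTriangular N) (hb : IsDominatedWeight b)
    {W B : Finset α} (hW : W ⊆ (N x \ S).erase x) (hB : B ⊆ S.erase x) :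
    vertexWeight N b S x + ∑ q ∈ W, vertexGain N b S x q + ∑ w ∈ B, vertexGain N b S x w ≤
      moveGain N b S x := by
  have hWB : Disjoint W B := disjoint_left.2 fun t htW htB =>
    (mem_sdiff.1 (mem_of_mem_erase (hW htW))).2 (mem_of_mem_erase (hB htB))
  have hx : x ∉ W ∪ B := fun hx =>
    (mem_union.1 hx).elim (fun h => notMem_erase x _ (hW h)) (fun h => notMem_erase x _ (hB h))
  rw [← vertexGain_self hN hb, add_assoc, ← sum_union hWB, ← sum_insert hx]
  exact sum_vertexGain_le_moveGain _

/-- Each undominated neighbor `q` of `x` that does not gain `c` by itself may draw on the gain of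
the vertices of `B` adjacent to it, each of which can serve all its fresh neighbors. -/
lemma weight_add_mul_card_le_moveGain_of_charging (hN : IsTriangular N)
    (hb : IsDominatedWeight b) {B : Finset α} {c : ℕ} (hB : B ⊆ S.erase x)
    (hcharge : ∀ w ∈ B, #((freshNbhd N S x w).erase x) ≤ vertexGain N b S x w)
    (hc : ∀ q ∈ (N x \ S).erase x, c ≤ vertexGain N b S x q + #{w ∈ B | q ∈ N w}) :
    vertexWeight N b S x + c * #((N x \ S).erase x) ≤ moveGain N b S x := by
  set W := (N x \ S).erase x
  have hfresh : ∀ w, (freshNbhd N S x w).erase x = {q ∈ W | q ∈ N w} := by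
    intro w
    ext q
    simp only [W, mem_erase, mem_freshNbhd, mem_filter, mem_sdiff]
    tauto
  have hcount : ∑ q ∈ W, #{w ∈ B | q ∈ N w} ≤ ∑ w ∈ B, vertexGain N b S x w :=
    calc ∑ q ∈ W, #{w ∈ B | q ∈ N w} = ∑ w ∈ B, #((freshNbhd N S x w).erase x) := by
          simp only [hfresh]
          exact sum_card_bipartiteAbove_eq_sum_card_bipartiteBelow fun q w => q ∈ N w
      _ ≤ ∑ w ∈ B, vertexGain N b S x w := sum_le_sum hcharge
  calc vertexWeight N b S x + c * #W
      ≤ vertexWeight N b S x + ∑ q ∈ W, (vertexGain N b S x q + #{w ∈ B | q ∈ N w}) := by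
        rw [mul_comm]
        exact Nat.add_le_add_left (card_nsmul_le_sum W _ c hc) _
    _ ≤ vertexWeight N b S x + ∑ q ∈ W, vertexGain N b S x q + ∑ w ∈ B, vertexGain N b S x w := by
        rw [sum_add_distrib]
        omega
    _ ≤ moveGain N b S x := weight_add_sum_add_sum_le_moveGain hN hb subset_rfl hB

lemma weight_add_mul_card_le_moveGain (hN : IsTriangular N) (hb : IsDominatedWeight b) {c : ℕ}
    (hc : ∀ q ∈ (N x \ S).erase x, c ≤ vertexGain N b S x q) :
    vertexWeight N b S x + c * #((N x \ S).erase x) ≤ moveGain N b S x :=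
  weight_add_mul_card_le_moveGain_of_charging hN hb (empty_subset _) (by simp) (by simpa using hc)

lemma residualDegree_add_six_mul_le_moveGain (hN : IsTriangular N) (hb : IsDominatedWeight b)
    (x : α) :
    b (residualDegree N S x) + 6 * residualDegree N S x ≤ moveGain N b S x := by
  have hgain := weight_add_mul_card_le_moveGain (S := S) (x := x) (c := 6) hN hb fun q hq =>
    have hq := mem_sdiff.1 (mem_of_mem_erase hq)
    six_le_vertexGain_of_notMem hb hq.2 hq.1
  by_cases hx : x ∈ S
  · rwa [vertexWeight, if_pos hx, card_sdiff_erase_of_mem hx] at hgain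
  · rw [vertexWeight, if_neg hx] at hgain
    have hcard := card_sdiff_erase_of_notMem hN hx
    have hle := hb.le_nine (residualDegree N S x)
    omega

lemma fifteen_le_moveGain_of_notMem (hN : IsTriangular N) (hb : IsDominatedWeight b)
    (hx : x ∉ S) : 15 ≤ moveGain N b S x := by
  have hself := sum_vertexGain_le_moveGain (N := N) (b := b) (S := S) (x := x) {x}
  rwa [sum_singleton, vertexGain_self hN hb, vertexWeight, if_neg hx] at hself

/-- Dominator has a move `x` such that, whatever Staller answers, the two moves together lower the
potential by at least `54`, and `x` alone lowers it by at least `27` (so the game may end). -/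
def HasGoodMove (N : α → Finset α) (b : ℕ → ℕ) (S : Finset α) : Prop :=
  ∃ x, 27 ≤ moveGain N b S x ∧
    ∀ y, ¬ N y ⊆ S ∪ N x → 54 ≤ moveGain N b S x + moveGain N b (S ∪ N x) y

lemma hasGoodMove_of_le {g r : ℕ} (hx : g ≤ moveGain N b S x) (hg : 27 ≤ g) (hgr : 54 ≤ g + r)
    (hreply : ∀ y, ¬ N y ⊆ S ∪ N x → r ≤ moveGain N b (S ∪ N x) y) : HasGoodMove N b S :=
  ⟨x, hg.trans hx, fun y hy => hgr.trans (Nat.add_le_add hx (hreply y hy))⟩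

end Potential

section Phases

open Finset

variable {α : Type*} {N : α → Finset α} {S T : Finset α} {x v : α}

/-- The weight of a dominated vertex while some residual degree is at least `5`. -/
def coarseWeight : ℕ → ℕ
  | 0 => 0
  | _ + 1 => 9

/-- The weight of a dominated vertex once all residual degrees are at most `4`. -/
def fineWeight : ℕ → ℕ
  | 0 => 0
  | 1 => 6
  | 2 => 7
  | _ + 3 => 9

lemma isDominatedWeight_coarseWeight : IsDominatedWeight coarseWeight where
  monotone := monotone_nat_of_le_succ (by rintro (_ | _) <;> simp [coarseWeight])
  zero := rfl
  le_nine := by rintro (_ | _) <;> simp [coarseWeight]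

lemma isDominatedWeight_fineWeight : IsDominatedWeight fineWeight where
  monotone := monotone_nat_of_le_succ (by rintro (_ | _ | _ | _) <;> simp [fineWeight])
  zero := rfl
  le_nine := by rintro (_ | _ | _ | _) <;> simp [fineWeight]

lemma fineWeight_le_coarseWeight (k : ℕ) : fineWeight k ≤ coarseWeight k := by
  rcases k with _ | _ | _ | _ <;> simp [fineWeight, coarseWeight]

lemma card_freshNbhd_le_vertexGain_add_one (hv : v ∈ S) (h : residualDegree N S v ≤ 4) :
    #(freshNbhd N S x v) ≤ vertexGain N fineWeight S x v + 1 := by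
  have table : ∀ n ≤ 4, ∀ k ≤ n, k ≤ fineWeight n - fineWeight (n - k) + 1 := by decide
  rw [vertexGain_of_mem hv]
  exact table _ h _ card_freshNbhd_le_residualDegree

lemma card_freshNbhd_le_vertexGain (hv : v ∈ S) (h : residualDegree N S v ≤ 3) :
    #(freshNbhd N S x v) ≤ vertexGain N fineWeight S x v := by
  have table : ∀ n ≤ 3, ∀ k ≤ n, k ≤ fineWeight n - fineWeight (n - k) := by decide
  rw [vertexGain_of_mem hv]
  exact table _ h _ card_freshNbhd_le_residualDegree

lemma three_le_vertexGain (hv : v ∈ S) (h : residualDegree N S v ≤ 3)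
    (hfresh : 1 < #(freshNbhd N S x v)) :
    3 ≤ vertexGain N fineWeight S x v := by
  have table : ∀ n ≤ 3, ∀ k ≤ n, 1 < k → 3 ≤ fineWeight n - fineWeight (n - k) := by decide
  rw [vertexGain_of_mem hv]
  exact table _ h _ card_freshNbhd_le_residualDegree hfresh

lemma nine_le_vertexGain (hv : v ∈ S) (h : residualDegree N S v ≤ 3)
    (hfresh : 2 < #(freshNbhd N S x v)) :
    9 ≤ vertexGain N fineWeight S x v := by
  have table : ∀ n ≤ 3, ∀ k ≤ n, 2 < k → 9 ≤ fineWeight n - fineWeight (n - k) := by decide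
  rw [vertexGain_of_mem hv]
  exact table _ h _ card_freshNbhd_le_residualDegree hfresh

lemma seven_le_vertexGain (hv : v ∈ S) (h : residualDegree N S v ≤ 2)
    (hfresh : 1 < #(freshNbhd N S x v)) :
    7 ≤ vertexGain N fineWeight S x v := by
  have table : ∀ n ≤ 2, ∀ k ≤ n, 1 < k → 7 ≤ fineWeight n - fineWeight (n - k) := by decide
  rw [vertexGain_of_mem hv]
  exact table _ h _ card_freshNbhd_le_residualDegree hfresh

lemma card_freshNbhd_pos_of_mem {t : α} (htv : t ∈ N v) (htx : t ∈ N x) (ht : t ∉ S) :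
    0 < #(freshNbhd N S x v) :=
  card_pos.2 ⟨t, mem_freshNbhd.2 ⟨htv, htx, ht⟩⟩

lemma one_le_vertexGain {t : α} (hv : v ∈ S) (h : residualDegree N S v ≤ 3) (htv : t ∈ N v)
    (htx : t ∈ N x) (ht : t ∉ S) : 1 ≤ vertexGain N fineWeight S x v :=
  (Nat.succ_le_of_lt (card_freshNbhd_pos_of_mem htv htx ht)).trans
    (card_freshNbhd_le_vertexGain hv h)

lemma residualDegree_le_of_subset {k : ℕ} (hST : S ⊆ T) (h : ∀ v ∉ S, residualDegree N S v ≤ k) :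
    ∀ v ∉ T, residualDegree N T v ≤ k :=
  fun v hv => (residualDegree_anti hST v).trans (h v (mt (@hST v) hv))

lemma two_lt_residualDegree {p q r : α} (hp : p ∈ N v) (hpS : p ∉ S) (hq : q ∈ N v) (hqS : q ∉ S)
    (hr : r ∈ N v) (hrS : r ∉ S) (hpq : p ≠ q) (hpr : p ≠ r) (hqr : q ≠ r) :
    2 < residualDegree N S v :=
  two_lt_card.2 ⟨p, mem_sdiff.2 ⟨hp, hpS⟩, q, mem_sdiff.2 ⟨hq, hqS⟩, r, mem_sdiff.2 ⟨hr, hrS⟩,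
    hpq, hpr, hqr⟩

lemma nine_le_vertexGain_of_notMem (hN : IsTriangular N) (hx : x ∉ S)
    (hv : v ∈ (N x \ S).erase x) (h : residualDegree N S v ≤ 3) :
    9 ≤ vertexGain N fineWeight S x v := by
  obtain ⟨hvx, hv⟩ := mem_erase.1 hv
  obtain ⟨hvN, hvS⟩ := mem_sdiff.1 hv
  have hfresh : 1 < #(freshNbhd N S x v) := one_lt_card.2
    ⟨x, mem_freshNbhd.2 ⟨hN.symm hvN, hN.mem_self x, hx⟩,
      v, mem_freshNbhd.2 ⟨hN.mem_self v, hvN, hvS⟩, hvx.symm⟩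
  exact sub_le_vertexGain_of_notMem (k := 1) isDominatedWeight_fineWeight hvS hvN (by omega)

lemma fifteen_le_vertexGain_of_notMem (hv : v ∉ S) (hvx : v ∈ N x)
    (h : residualDegree N S v ≤ #(freshNbhd N S x v)) : 15 ≤ vertexGain N fineWeight S x v :=
  sub_le_vertexGain_of_notMem (k := 0) isDominatedWeight_fineWeight hv hvx h

lemma three_le_vertexGain_of_common {p s : α} (hN : IsTriangular N) (hx : x ∉ S) (hs : s ∈ S)
    (hdeg : residualDegree N S s ≤ 3) (hxs : x ∈ N s) (hp : p ∈ (N x \ S).erase x)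
    (hps : p ∈ N s) : 3 ≤ vertexGain N fineWeight S x s :=
  three_le_vertexGain hs hdeg (one_lt_card.2
    ⟨p, mem_freshNbhd.2 ⟨hps, mem_sdiff.1 (mem_of_mem_erase hp)⟩,
      x, mem_freshNbhd.2 ⟨hxs, hN.mem_self x, hx⟩, ne_of_mem_erase hp⟩)

/-- An undominated neighbor of `x` that keeps an undominated neighbor `p` after `x` is played gains
only `9`; a dominated common neighbor with `p` makes up for the missing unit. -/
lemma ten_le_vertexGain_add_card {q : α} (hN : IsTriangular N) (hdegq : residualDegree N S q ≤ 2)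
    (hq : q ∉ S) (hqx : q ∈ N x) :
    10 ≤ vertexGain N fineWeight S x q + #{w ∈ S.erase x | q ∈ N w} := by
  have hfresh := card_freshNbhd_pos_of_mem (hN.mem_self q) hqx hq
  by_cases hkeep : residualDegree N S q ≤ #(freshNbhd N S x q)
  · have hgain := fifteen_le_vertexGain_of_notMem hq hqx hkeep
    omega
  · have hgain : 9 ≤ vertexGain N fineWeight S x q :=
      sub_le_vertexGain_of_notMem (k := 1) isDominatedWeight_fineWeight hq hqx (by omega)
    obtain ⟨p, hp, hpfresh⟩ := exists_mem_notMem_of_card_lt_card (not_le.1 hkeep)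
    obtain ⟨hpq, hpS⟩ := mem_sdiff.1 hp
    have hpx : p ∉ N x := fun h => hpfresh (mem_freshNbhd.2 ⟨hpq, h, hpS⟩)
    have hne : p ≠ q := fun h => hpx (h ▸ hqx)
    obtain ⟨s, hsp, hsq, hsp', hsq'⟩ := hN.exists_common hpq hne
    have hs : s ∈ S := by
      by_contra hs
      exact hdegq.not_gt (two_lt_residualDegree (hN.mem_self q) hq hpq hpS hsq hs hne.symm
        hsq'.symm hsp'.symm)
    have hsx : s ≠ x := fun h => hpx (h ▸ hN.symm hsp)
    have hserve : 0 < #{w ∈ S.erase x | q ∈ N w} :=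
      card_pos.2 ⟨s, mem_filter.2 ⟨mem_erase.2 ⟨hsx, hs⟩, hN.symm hsq⟩⟩
    omega

/-- If `q` gains only `8`, its common neighbor with `x` is dominated and pays for the missing
unit. -/
lemma nine_le_vertexGain_add_card {q : α} (hN : IsTriangular N) (hdegq : residualDegree N S q ≤ 4)
    (hx : x ∉ S) (hq : q ∈ (N x \ S).erase x) :
    9 ≤ vertexGain N fineWeight S x q + #{w ∈ {w ∈ S | w ∈ N x} | q ∈ N w} := by
  obtain ⟨hqx, hq⟩ := mem_erase.1 hq
  obtain ⟨hqN, hqS⟩ := mem_sdiff.1 hq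
  have hxfresh : x ∈ freshNbhd N S x q := mem_freshNbhd.2 ⟨hN.symm hqN, hN.mem_self x, hx⟩
  have hqfresh : q ∈ freshNbhd N S x q := mem_freshNbhd.2 ⟨hN.mem_self q, hqN, hqS⟩
  obtain ⟨w, hwq, hwx, hwq', hwx'⟩ := hN.exists_common hqN hqx
  by_cases hw : w ∈ S
  · have hfresh : 1 < #(freshNbhd N S x q) := one_lt_card.2 ⟨x, hxfresh, q, hqfresh, hqx.symm⟩
    have hgain : 8 ≤ vertexGain N fineWeight S x q :=
      sub_le_vertexGain_of_notMem (k := 2) isDominatedWeight_fineWeight hqS hqN (by omega)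
    have hserve : 0 < #{w ∈ {w ∈ S | w ∈ N x} | q ∈ N w} :=
      card_pos.2 ⟨w, mem_filter.2 ⟨mem_filter.2 ⟨hw, hwx⟩, hN.symm hwq⟩⟩
    omega
  · have hfresh : 2 < #(freshNbhd N S x q) := two_lt_card.2
      ⟨x, hxfresh, q, hqfresh, w, mem_freshNbhd.2 ⟨hwq, hwx, hw⟩, hqx.symm, hwx'.symm, hwq'.symm⟩
    have hgain : 9 ≤ vertexGain N fineWeight S x q :=
      sub_le_vertexGain_of_notMem (k := 1) isDominatedWeight_fineWeight hqS hqN (by omega)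
    omega

variable [Fintype α]

lemma fineWeight_add_eight_mul_le_moveGain (hN : IsTriangular N)
    (hwhite : ∀ v ∉ S, residualDegree N S v ≤ 3) (hx : x ∈ S) :
    fineWeight (residualDegree N S x) + 8 * residualDegree N S x ≤ moveGain N fineWeight S x := by
  have hgain : ∀ q ∈ (N x \ S).erase x, 8 ≤ vertexGain N fineWeight S x q := by
    intro q hq
    obtain ⟨hqx, hq⟩ := mem_sdiff.1 (mem_of_mem_erase hq)
    have hfresh := card_freshNbhd_pos_of_mem (hN.mem_self q) hqx hq
    have hdeg := hwhite q hq
    exact sub_le_vertexGain_of_notMem (k := 2) isDominatedWeight_fineWeight hq hqx (by omega)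
  have hmove := weight_add_mul_card_le_moveGain hN isDominatedWeight_fineWeight hgain
  rwa [vertexWeight, if_pos hx, card_sdiff_erase_of_mem hx] at hmove

lemma fineWeight_add_ten_mul_le_moveGain (hN : IsTriangular N)
    (hdeg : ∀ v, residualDegree N S v ≤ 3) (hwhite : ∀ v ∉ S, residualDegree N S v ≤ 2)
    (hx : x ∈ S) :
    fineWeight (residualDegree N S x) + 10 * residualDegree N S x ≤ moveGain N fineWeight S x := by
  have hcharge : ∀ w ∈ S.erase x,
      #((freshNbhd N S x w).erase x) ≤ vertexGain N fineWeight S x w := fun w hw =>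
    card_erase_le.trans (card_freshNbhd_le_vertexGain (mem_of_mem_erase hw) (hdeg w))
  have hserved : ∀ q ∈ (N x \ S).erase x,
      10 ≤ vertexGain N fineWeight S x q + #{w ∈ S.erase x | q ∈ N w} := by
    intro q hq
    obtain ⟨hqx, hq⟩ := mem_sdiff.1 (mem_of_mem_erase hq)
    exact ten_le_vertexGain_add_card hN (hwhite q hq) hq hqx
  have hmove := weight_add_mul_card_le_moveGain_of_charging hN isDominatedWeight_fineWeight
    (erase_subset_erase x subset_rfl) hcharge hserved
  rwa [vertexWeight, if_pos hx, card_sdiff_erase_of_mem hx] at hmove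

lemma nine_le_coarseWeight {k : ℕ} (hk : 0 < k) : 9 ≤ coarseWeight k := by
  obtain ⟨k, rfl⟩ := Nat.exists_eq_add_of_lt hk
  simp [coarseWeight]

lemma six_le_fineWeight {k : ℕ} (hk : 0 < k) : 6 ≤ fineWeight k :=
  isDominatedWeight_fineWeight.monotone (Nat.succ_le_of_lt hk)

lemma fifteen_le_moveGain_coarseWeight (hN : IsTriangular N) (hx : ¬ N x ⊆ S) :
    15 ≤ moveGain N coarseWeight S x := by
  have hpos := residualDegree_pos_iff.2 hx
  have hweight := nine_le_coarseWeight hpos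
  have hgain := residualDegree_add_six_mul_le_moveGain (S := S) hN isDominatedWeight_coarseWeight x
  omega

lemma twelve_le_moveGain (hN : IsTriangular N) (hx : ¬ N x ⊆ S) :
    12 ≤ moveGain N fineWeight S x := by
  have hpos := residualDegree_pos_iff.2 hx
  have hweight := six_le_fineWeight hpos
  have hgain := residualDegree_add_six_mul_le_moveGain (S := S) hN isDominatedWeight_fineWeight x
  omega

lemma fourteen_le_moveGain (hN : IsTriangular N) (hwhite : ∀ v ∉ S, residualDegree N S v ≤ 3)
    (hx : ¬ N x ⊆ S) : 14 ≤ moveGain N fineWeight S x := by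
  by_cases hxS : x ∈ S
  · have hpos := residualDegree_pos_iff.2 hx
    have hweight := six_le_fineWeight hpos
    have hgain := fineWeight_add_eight_mul_le_moveGain hN hwhite hxS
    omega
  · exact (fifteen_le_moveGain_of_notMem hN isDominatedWeight_fineWeight hxS).trans' (by norm_num)

lemma sixteen_le_moveGain_of_notMem (hN : IsTriangular N) (hdeg : ∀ v, residualDegree N S v ≤ 3)
    (hx : x ∉ S) : 16 ≤ moveGain N fineWeight S x := by
  obtain ⟨u, hux, hne⟩ := hN.exists_ne x
  have hu : 1 ≤ vertexGain N fineWeight S x u := by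
    by_cases hu : u ∈ S
    · exact one_le_vertexGain hu (hdeg u) (hN.symm hux) (hN.mem_self x) hx
    · exact (six_le_vertexGain_of_notMem isDominatedWeight_fineWeight hu hux).trans' (by norm_num)
  have hmove := sum_vertexGain_le_moveGain (N := N) (b := fineWeight) (S := S) (x := x) {x, u}
  rw [sum_pair hne.symm, vertexGain_self hN isDominatedWeight_fineWeight, vertexWeight,
    if_neg hx] at hmove
  omega

lemma sixteen_le_moveGain (hN : IsTriangular N) (hdeg : ∀ v, residualDegree N S v ≤ 3)
    (hwhite : ∀ v ∉ S, residualDegree N S v ≤ 2) (hx : ¬ N x ⊆ S) :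
    16 ≤ moveGain N fineWeight S x := by
  by_cases hxS : x ∈ S
  · have hpos := residualDegree_pos_iff.2 hx
    have hweight := six_le_fineWeight hpos
    have hgain := fineWeight_add_ten_mul_le_moveGain hN hdeg hwhite hxS
    omega
  · exact sixteen_le_moveGain_of_notMem hN hdeg hxS

lemma hasGoodMove_coarseWeight (hN : IsTriangular N) (hx : 5 ≤ residualDegree N S x) :
    HasGoodMove N coarseWeight S := by
  have hweight := nine_le_coarseWeight (hx.trans_lt' (by norm_num))
  have hgain := residualDegree_add_six_mul_le_moveGain (S := S) hN isDominatedWeight_coarseWeight x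
  exact hasGoodMove_of_le (x := x) (g := 39) (r := 15) (by omega) (by norm_num) (by norm_num)
    fun y hy => fifteen_le_moveGain_coarseWeight hN hy

lemma hasGoodMove_of_forty_le (hN : IsTriangular N) (hwhite : ∀ v ∉ S, residualDegree N S v ≤ 3)
    (hx : 40 ≤ moveGain N fineWeight S x) : HasGoodMove N fineWeight S :=
  hasGoodMove_of_le (r := 14) hx (by norm_num) (by norm_num) fun y hy =>
    fourteen_le_moveGain hN (residualDegree_le_of_subset subset_union_left hwhite) hy

lemma hasGoodMove_of_thirtyEight_le (hN : IsTriangular N)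
    (hdeg : ∀ v, residualDegree N S v ≤ 3) (hwhite : ∀ v ∉ S, residualDegree N S v ≤ 2)
    (hx : 38 ≤ moveGain N fineWeight S x) : HasGoodMove N fineWeight S :=
  hasGoodMove_of_le (r := 16) hx (by norm_num) (by norm_num) fun y hy =>
    sixteen_le_moveGain hN (fun v => (residualDegree_anti subset_union_left v).trans (hdeg v))
      (residualDegree_le_of_subset subset_union_left hwhite) hy

lemma hasGoodMove_of_four_le_of_notMem (hN : IsTriangular N)
    (hdeg : ∀ v, residualDegree N S v ≤ 4) (hx : x ∉ S) (hdegx : 4 ≤ residualDegree N S x) :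
    HasGoodMove N fineWeight S := by
  have hcharge : ∀ w ∈ {w ∈ S | w ∈ N x},
      #((freshNbhd N S x w).erase x) ≤ vertexGain N fineWeight S x w := by
    intro w hw
    obtain ⟨hwS, hwx⟩ := mem_filter.1 hw
    have hxfresh : x ∈ freshNbhd N S x w := mem_freshNbhd.2 ⟨hN.symm hwx, hN.mem_self x, hx⟩
    rw [card_erase_of_mem hxfresh, Nat.sub_le_iff_le_add]
    exact card_freshNbhd_le_vertexGain_add_one hwS (hdeg w)
  have hmove := weight_add_mul_card_le_moveGain_of_charging hN isDominatedWeight_fineWeight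
    (B := {w ∈ S | w ∈ N x})
    (subset_erase.2 ⟨filter_subset _ S, fun h => hx (mem_of_mem_filter x h)⟩)
    hcharge fun q hq => nine_le_vertexGain_add_card hN (hdeg q) hx hq
  rw [vertexWeight, if_neg hx] at hmove
  have hcard := card_sdiff_erase_of_notMem hN hx
  exact hasGoodMove_of_le (x := x) (g := 42) (r := 12) (by omega) (by norm_num) (by norm_num)
    fun y hy => twelve_le_moveGain hN hy

lemma hasGoodMove_of_four_le_of_mem (hN : IsTriangular N)
    (hwhite : ∀ v ∉ S, residualDegree N S v ≤ 3) (hx : x ∈ S) (hdegx : 4 ≤ residualDegree N S x) :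
    HasGoodMove N fineWeight S := by
  have hweight : 9 ≤ fineWeight (residualDegree N S x) :=
    isDominatedWeight_fineWeight.monotone (show 3 ≤ _ by omega)
  have hgain := fineWeight_add_eight_mul_le_moveGain hN hwhite hx
  exact hasGoodMove_of_forty_le (x := x) hN hwhite (by omega)

lemma hasGoodMove_of_three_le_of_mem (hN : IsTriangular N)
    (hdeg : ∀ v, residualDegree N S v ≤ 3) (hwhite : ∀ v ∉ S, residualDegree N S v ≤ 2)
    (hx : x ∈ S) (hdegx : 3 ≤ residualDegree N S x) : HasGoodMove N fineWeight S := by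
  have hweight : 9 ≤ fineWeight (residualDegree N S x) :=
    isDominatedWeight_fineWeight.monotone hdegx
  have hgain := fineWeight_add_ten_mul_le_moveGain hN hdeg hwhite hx
  exact hasGoodMove_of_thirtyEight_le (x := x) hN hdeg hwhite (by omega)

lemma hasGoodMove_of_two_lt_card_freshNbhd {w : α} (hN : IsTriangular N)
    (hdeg : ∀ v, residualDegree N S v ≤ 3) (hx : x ∉ S) (hw : w ∈ S)
    (hfresh : 2 < #(freshNbhd N S x w)) : HasGoodMove N fineWeight S := by
  have hsub : freshNbhd N S x w ⊆ N x \ S := sdiff_subset_sdiff inter_subset_right subset_rfl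
  have hdegx : #(freshNbhd N S x w) ≤ residualDegree N S x := card_le_card hsub
  have hcard := card_sdiff_erase_of_notMem hN hx
  have hmove := weight_add_sum_add_sum_le_moveGain hN isDominatedWeight_fineWeight
    (subset_refl ((N x \ S).erase x)) (B := {w})
    (singleton_subset_iff.2 (mem_erase.2 ⟨fun h => hx (h ▸ hw), hw⟩))
  have hwhites : #((N x \ S).erase x) • 9 ≤
      ∑ q ∈ (N x \ S).erase x, vertexGain N fineWeight S x q :=
    card_nsmul_le_sum _ _ _ fun q hq => nine_le_vertexGain_of_notMem hN hx hq (hdeg q)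
  have hgainw := nine_le_vertexGain hw (hdeg w) hfresh
  rw [vertexWeight, if_neg hx, sum_singleton] at hmove
  rw [smul_eq_mul] at hwhites
  exact hasGoodMove_of_forty_le (x := x) hN (fun v _ => hdeg v) (by omega)

lemma hasGoodMove_of_undominated_triangle {p q : α} (hN : IsTriangular N)
    (hdeg : ∀ v ∉ S, residualDegree N S v ≤ 3) (hx : x ∉ S) (hp : p ∈ (N x \ S).erase x)
    (hq : q ∈ (N x \ S).erase x) (hpq : p ∈ N q) (hne : p ≠ q) :
    HasGoodMove N fineWeight S := by
  have hfifteen : ∀ r ∈ (N x \ S).erase x, ∀ s ∈ (N x \ S).erase x, s ∈ N r → s ≠ r →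
      15 ≤ vertexGain N fineWeight S x r := by
    intro r hr s hs hsr hsr'
    obtain ⟨hrx, hr⟩ := mem_erase.1 hr
    obtain ⟨hrN, hrS⟩ := mem_sdiff.1 hr
    obtain ⟨hsx, hs⟩ := mem_erase.1 hs
    obtain ⟨hsN, hsS⟩ := mem_sdiff.1 hs
    have hfresh : 2 < #(freshNbhd N S x r) := two_lt_card.2
      ⟨x, mem_freshNbhd.2 ⟨hN.symm hrN, hN.mem_self x, hx⟩,
        r, mem_freshNbhd.2 ⟨hN.mem_self r, hrN, hrS⟩, s, mem_freshNbhd.2 ⟨hsr, hsN, hsS⟩,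
        hrx.symm, hsx.symm, hsr'.symm⟩
    exact fifteen_le_vertexGain_of_notMem hrS hrN ((hdeg r hrS).trans hfresh)
  have hgainp := hfifteen p hp q hq (hN.symm hpq) hne.symm
  have hgainq := hfifteen q hq p hp hpq hne
  have hmove := weight_add_sum_add_sum_le_moveGain (b := fineWeight) hN isDominatedWeight_fineWeight
    (W := {p, q}) (insert_subset hp (singleton_subset_iff.2 hq)) (empty_subset _)
  rw [vertexWeight, if_neg hx, sum_pair hne, sum_empty] at hmove
  exact hasGoodMove_of_forty_le (x := x) hN hdeg (by omega)

lemma exists_mem_common_of_not_hasGoodMove {p : α} (hN : IsTriangular N)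
    (hdeg : ∀ v ∉ S, residualDegree N S v ≤ 3) (hno : ¬ HasGoodMove N fineWeight S) (hx : x ∉ S)
    (hp : p ∈ (N x \ S).erase x) : ∃ s ∈ S, x ∈ N s ∧ p ∈ N s := by
  obtain ⟨hne, hpx⟩ := mem_erase.1 hp
  obtain ⟨s, hsp, hsx, hsp', hsx'⟩ := hN.exists_common (mem_sdiff.1 hpx).1 hne
  refine ⟨s, ?_, hN.symm hsx, hN.symm hsp⟩
  by_contra hs
  exact hno (hasGoodMove_of_undominated_triangle hN hdeg hx
    (mem_erase.2 ⟨hsx', mem_sdiff.2 ⟨hsx, hs⟩⟩) hp hsp hsp')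

lemma eq_of_common_of_not_hasGoodMove {p q s : α} (hN : IsTriangular N)
    (hdeg : ∀ v, residualDegree N S v ≤ 3) (hno : ¬ HasGoodMove N fineWeight S) (hx : x ∉ S)
    (hs : s ∈ S) (hxs : x ∈ N s) (hp : p ∈ (N x \ S).erase x) (hps : p ∈ N s)
    (hq : q ∈ (N x \ S).erase x) (hqs : q ∈ N s) : p = q := by
  obtain ⟨hpx, hp⟩ := mem_erase.1 hp
  obtain ⟨hqx, hq⟩ := mem_erase.1 hq
  by_contra hne
  refine hno (hasGoodMove_of_two_lt_card_freshNbhd hN hdeg hx hs (two_lt_card.2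
    ⟨x, mem_freshNbhd.2 ⟨hxs, hN.mem_self x, hx⟩, p, mem_freshNbhd.2 ⟨hps, mem_sdiff.1 hp⟩,
      q, mem_freshNbhd.2 ⟨hqs, mem_sdiff.1 hq⟩, hpx.symm, hqx.symm, hne⟩))

/-- Playing `x` gains `15 + 9 + 9` on `x` and its undominated neighbors `p`, `q`, and `3 + 3` on
the dominated vertices `s`, `t`; the missing unit comes from `hextra`. -/
lemma forty_le_moveGain {p q s t : α} (hN : IsTriangular N) (hdeg : ∀ v, residualDegree N S v ≤ 3)
    (hx : x ∉ S) (hp : p ∈ (N x \ S).erase x) (hq : q ∈ (N x \ S).erase x) (hpq : p ≠ q)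
    (hs : s ∈ S) (ht : t ∈ S) (hst : s ≠ t) (hxs : x ∈ N s) (hps : p ∈ N s) (hxt : x ∈ N t)
    (hqt : q ∈ N t)
    (hextra : 10 ≤ vertexGain N fineWeight S x p +
      ∑ u ∈ (S.erase s).erase t, vertexGain N fineWeight S x u) :
    40 ≤ moveGain N fineWeight S x := by
  have hgainq := nine_le_vertexGain_of_notMem hN hx hq (hdeg q)
  have hgains := three_le_vertexGain_of_common hN hx hs (hdeg s) hxs hp hps
  have hgaint := three_le_vertexGain_of_common hN hx ht (hdeg t) hxt hq hqt
  have hmove := weight_add_sum_add_sum_le_moveGain (b := fineWeight) hN isDominatedWeight_fineWeight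
    (W := {p, q}) (B := S) (insert_subset hp (singleton_subset_iff.2 hq))
    (subset_erase.2 ⟨subset_rfl, hx⟩)
  rw [vertexWeight, if_neg hx, sum_pair hpq, ← add_sum_erase S _ hs,
    ← add_sum_erase (S.erase s) _ (mem_erase.2 ⟨hst.symm, ht⟩)] at hmove
  omega

lemma ten_le_vertexGain_add_sum {p s t : α} (hN : IsTriangular N)
    (hdeg : ∀ v, residualDegree N S v ≤ 3) (hno : ¬ HasGoodMove N fineWeight S) (hx : x ∉ S)
    (hp : p ∈ (N x \ S).erase x) (hxs : x ∈ N s) (hpt : p ∉ N t) :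
    10 ≤ vertexGain N fineWeight S x p +
      ∑ u ∈ (S.erase s).erase t, vertexGain N fineWeight S x u := by
  have hgainp := nine_le_vertexGain_of_notMem hN hx hp (hdeg p)
  obtain ⟨hpx, hpN, hpS⟩ : p ≠ x ∧ p ∈ N x ∧ p ∉ S := by simpa using hp
  have hxp : x ∈ (N p \ S).erase p := by simp [hN.symm hpN, hx, hpx.symm]
  have hcard := card_sdiff_erase_of_notMem hN hpS
  by_cases hdegp : residualDegree N S p ≤ 2
  · have hfresh : 1 < #(freshNbhd N S x p) := one_lt_card.2
      ⟨p, mem_freshNbhd.2 ⟨hN.mem_self p, hpN, hpS⟩,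
        x, mem_freshNbhd.2 ⟨hN.symm hpN, hN.mem_self x, hx⟩, hpx⟩
    have hgain := fifteen_le_vertexGain_of_notMem hpS hpN (hdegp.trans hfresh)
    omega
  · obtain ⟨r, hr, hrx⟩ := exists_mem_ne (show 1 < #((N p \ S).erase p) by omega) x
    obtain ⟨u, hu, hpu, hru⟩ :=
      exists_mem_common_of_not_hasGoodMove hN (fun v _ => hdeg v) hno hpS hr
    have hus : u ≠ s := by
      rintro rfl
      exact hrx (eq_of_common_of_not_hasGoodMove hN hdeg hno hpS hu hpu hr hru hxp hxs)
    have hut : u ≠ t := fun h => hpt (h ▸ hpu)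
    have hsum : vertexGain N fineWeight S x u ≤ _ :=
      single_le_sum (f := vertexGain N fineWeight S x) (fun _ _ => Nat.zero_le _)
        (mem_erase.2 ⟨hut, mem_erase.2 ⟨hus, hu⟩⟩)
    have hgain := one_le_vertexGain hu (hdeg u) hpu hpN hpS
    omega

lemma hasGoodMove_of_three_le_of_notMem (hN : IsTriangular N)
    (hdeg : ∀ v, residualDegree N S v ≤ 3) (hx : x ∉ S) (hdegx : 3 ≤ residualDegree N S x) :
    HasGoodMove N fineWeight S := by
  by_contra hno
  have hwhite : ∀ v ∉ S, residualDegree N S v ≤ 3 := fun v _ => hdeg v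
  have hcard := card_sdiff_erase_of_notMem hN hx
  obtain ⟨p, hp, q, hq, hpq⟩ := one_lt_card.1 (show 1 < #((N x \ S).erase x) by omega)
  obtain ⟨s, hs, hxs, hps⟩ := exists_mem_common_of_not_hasGoodMove hN hwhite hno hx hp
  obtain ⟨t, ht, hxt, hqt⟩ := exists_mem_common_of_not_hasGoodMove hN hwhite hno hx hq
  have hpt : p ∉ N t := fun h =>
    hpq (eq_of_common_of_not_hasGoodMove hN hdeg hno hx ht hxt hp h hq hqt)
  have hst : s ≠ t := fun h => hpt (h ▸ hps)
  exact hno (hasGoodMove_of_forty_le hN hwhite (forty_le_moveGain hN hdeg hx hp hq hpq hs ht hst hxs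
    hps hxt hqt (ten_le_vertexGain_add_sum hN hdeg hno hx hp hxs hpt)))

end Phases

section Clusters

open Finset

variable {α : Type*} {N : α → Finset α} {S T : Finset α} {x v : α}

/-- The undominated vertices fall into clusters: each neighbor of an undominated vertex `t` sees
the same undominated vertices as `t`, so every move dominates a whole cluster. -/
def IsClustered (N : α → Finset α) (S : Finset α) : Prop :=
  ∀ t ∉ S, ∀ y ∈ N t, N y \ S = N t \ S

lemma IsClustered.mono (h : IsClustered N S) (hST : S ⊆ T) : IsClustered N T := by
  intro t ht y hy
  have hsdiff (z : α) : N z \ T = (N z \ S) \ T := by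
    rw [sdiff_sdiff_left, sup_eq_right.2 hST]
  rw [hsdiff y, hsdiff t, h t (mt (@hST t) ht) y hy]

variable [Fintype α]

lemma hasGoodMove_of_mem_nbhd_of_notMem_nbhd {u : α} (hN : IsTriangular N)
    (hdeg : ∀ v, residualDegree N S v ≤ 2) (hu : u ∉ S) (hv : v ∉ S) (hvu : v ∈ N u)
    (hx : x ∈ S) (hux : u ∈ N x) (hvx : v ∉ N x) : HasGoodMove N fineWeight S := by
  have hne : v ≠ u := fun h => hvx (h ▸ hux)
  obtain ⟨w, hwv, hwu, hwv', hwu'⟩ := hN.exists_common hvu hne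
  have hw : w ∈ S := by
    by_contra hw
    exact (hdeg u).not_gt (two_lt_residualDegree (hN.mem_self u) hu hvu hv hwu hw hne.symm
      hwu'.symm hwv'.symm)
  have hwx : w ≠ x := fun h => hvx (h ▸ hN.symm hwv)
  have hfresh {z : α} (huz : u ∈ N z) (hvz : v ∈ N z) : 1 < #(freshNbhd N S u z) := one_lt_card.2
    ⟨u, mem_freshNbhd.2 ⟨huz, hN.mem_self u, hu⟩, v, mem_freshNbhd.2 ⟨hvz, hvu, hv⟩, hne.symm⟩
  have hgainv := fifteen_le_vertexGain_of_notMem hv hvu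
    ((hdeg v).trans (hfresh (hN.symm hvu) (hN.mem_self v)))
  have hgainw := seven_le_vertexGain hw (hdeg w) (hfresh (hN.symm hwu) (hN.symm hwv))
  have hgainx := one_le_vertexGain (x := u) hx ((hdeg x).trans (by norm_num)) hux (hN.mem_self u) hu
  have hmove := weight_add_sum_add_sum_le_moveGain (x := u) (S := S) (b := fineWeight) hN
    isDominatedWeight_fineWeight (W := {v}) (B := {w, x}) (by simp [hvu, hv, hne])
    (by simp [insert_subset_iff, hw, hx, hwu', ne_of_mem_of_not_mem hx hu])
  rw [vertexWeight, if_neg hu, sum_singleton, sum_pair hwx] at hmove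
  exact hasGoodMove_of_thirtyEight_le (x := u) hN (fun v => (hdeg v).trans (by norm_num))
    (fun v _ => hdeg v) (by omega)

lemma hasGoodMove_of_residualDegree_le_one {u : α} (hN : IsTriangular N)
    (hdeg : ∀ v, residualDegree N S v ≤ 2) (hx : x ∈ S) (hux : u ∈ N x) (hvx : v ∈ N x)
    (hu : u ∉ S) (hv : v ∉ S) (hne : u ≠ v) (hdegu : residualDegree N S u ≤ 1)
    (hdegv : residualDegree N S v ≤ 1) : HasGoodMove N fineWeight S := by
  obtain ⟨w, hwu, -, hwu', hwx'⟩ := hN.exists_common hux fun h => hu (h ▸ hx)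
  have hw : w ∈ S := by
    by_contra hw
    exact hdegu.not_gt (one_lt_card.2
      ⟨u, mem_sdiff.2 ⟨hN.mem_self u, hu⟩, w, mem_sdiff.2 ⟨hwu, hw⟩, hwu'.symm⟩)
  have hdegx : 7 ≤ fineWeight (residualDegree N S x) := isDominatedWeight_fineWeight.monotone
    (one_lt_card.2 ⟨u, mem_sdiff.2 ⟨hux, hu⟩, v, mem_sdiff.2 ⟨hvx, hv⟩, hne⟩)
  have hgain {z : α} (hzx : z ∈ N x) (hz : z ∉ S) (hdegz : residualDegree N S z ≤ 1) :
      15 ≤ vertexGain N fineWeight S x z :=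
    fifteen_le_vertexGain_of_notMem hz hzx
      (hdegz.trans (card_freshNbhd_pos_of_mem (hN.mem_self z) hzx hz))
  have hgainu := hgain hux hu hdegu
  have hgainv := hgain hvx hv hdegv
  have hgainw := one_le_vertexGain hw ((hdeg w).trans (by norm_num)) (hN.symm hwu) hux hu
  have hmove := weight_add_sum_add_sum_le_moveGain (x := x) (S := S) (b := fineWeight) hN
    isDominatedWeight_fineWeight (W := {u, v}) (B := {w})
    (by simp [insert_subset_iff, hux, hu, hvx, hv, ne_of_mem_of_not_mem hx hu |>.symm,
      ne_of_mem_of_not_mem hx hv |>.symm]) (by simp [hw, hwx'])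
  rw [vertexWeight, if_pos hx, sum_singleton, sum_pair hne] at hmove
  exact hasGoodMove_of_thirtyEight_le (x := x) hN (fun v => (hdeg v).trans (by norm_num))
    (fun v _ => hdeg v) (by omega)

lemma twentySeven_le_moveGain_of_isClustered (hN : IsTriangular N) (hcl : IsClustered N S)
    (hx : ¬ N x ⊆ S) : 27 ≤ moveGain N fineWeight S x := by
  obtain ⟨t, htx, ht⟩ := not_subset.1 hx
  have hgain : ∀ q ∈ N t, vertexGain N fineWeight S x q = vertexWeight N fineWeight S q := by
    intro q hq
    have hqx : N q ⊆ S ∪ N x := by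
      refine sdiff_le_iff.1 ?_
      rw [hcl t ht q hq, ← hcl t ht x (hN.symm htx)]
      exact sdiff_subset
    rw [vertexGain, vertexWeight.eq_def N fineWeight (S ∪ N x), if_pos (hqx (hN.mem_self q)),
      residualDegree, sdiff_eq_empty_iff_subset.2 hqx, card_empty,
      isDominatedWeight_fineWeight.zero, Nat.sub_zero]
  have hweight : ∀ q ∈ N t, 6 ≤ vertexGain N fineWeight S x q := by
    intro q hq
    rw [hgain q hq, vertexWeight]
    split_ifs
    · exact six_le_fineWeight (residualDegree_pos_iff.2 fun h => ht (h (hN.symm hq)))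
    · norm_num
  obtain ⟨u, hu, hut⟩ := hN.exists_ne t
  obtain ⟨w, -, hw, hwu, hwt⟩ := hN.exists_common hu hut
  have hgaint := hgain t (hN.mem_self t)
  have hgainu := hweight u hu
  have hgainw := hweight w hw
  have hmove := sum_vertexGain_le_moveGain (N := N) (b := fineWeight) (S := S) (x := x) {t, u, w}
  rw [sum_insert (by simp [hut.symm, hwt.symm]), sum_pair hwu.symm] at hmove
  rw [vertexWeight, if_neg ht] at hgaint
  omega

lemma hasGoodMove_of_isClustered {t : α} (hN : IsTriangular N) (hcl : IsClustered N S)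
    (ht : t ∉ S) : HasGoodMove N fineWeight S :=
  hasGoodMove_of_le (x := t) (g := 27) (r := 27)
    (twentySeven_le_moveGain_of_isClustered hN hcl fun h => ht (h (hN.mem_self t)))
    le_rfl le_rfl
    fun _ => twentySeven_le_moveGain_of_isClustered hN (hcl.mono subset_union_left)

lemma isClustered_of_not_hasGoodMove (hN : IsTriangular N)
    (hdeg : ∀ v, residualDegree N S v ≤ 2) (hno : ¬ HasGoodMove N fineWeight S) :
    IsClustered N S := by
  intro t ht y hy
  have hty := hN.symm hy
  by_cases hyS : y ∈ S
  · have hsub {u : α} (hu : u ∉ S) (huy : u ∈ N y) : N u \ S ⊆ N y \ S := by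
      intro v hv
      obtain ⟨hvu, hvS⟩ := mem_sdiff.1 hv
      refine mem_sdiff.2 ⟨?_, hvS⟩
      by_contra hvy
      exact hno (hasGoodMove_of_mem_nbhd_of_notMem_nbhd hN hdeg hu hvS hvu hyS huy hvy)
    have hle {u v : α} (hu : u ∉ S) (huy : u ∈ N y) (hv : v ∉ S) (hvy : v ∈ N y) (hvu : v ∉ N u) :
        residualDegree N S u ≤ 1 :=
      Nat.le_of_lt_succ ((card_lt_card (ssubset_of_subset_of_ne (hsub hu huy) fun h =>
        hvu (mem_sdiff.1 (h.symm ▸ mem_sdiff.2 ⟨hvy, hv⟩)).1)).trans_le (hdeg y))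
    refine subset_antisymm (fun q hq => ?_) (hsub ht hty)
    obtain ⟨hqy, hq⟩ := mem_sdiff.1 hq
    refine mem_sdiff.2 ⟨?_, hq⟩
    by_contra hqt
    exact hno (hasGoodMove_of_residualDegree_le_one hN hdeg hyS hty hqy ht hq
      (fun h => hqt (h ▸ hN.mem_self t)) (hle ht hty hq hqy hqt)
      (hle hq hqy ht hty fun h => hqt (hN.symm h)))
  · rcases eq_or_ne y t with rfl | hne
    · rfl
    have hpair {z : α} (htz : t ∈ N z) (hyz : y ∈ N z) : {t, y} = N z \ S :=
      eq_of_subset_of_card_le (by simp [insert_subset_iff, htz, hyz, ht, hyS])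
        ((hdeg z).trans_eq (card_pair hne.symm).symm)
    rw [← hpair hty (hN.mem_self y), ← hpair (hN.mem_self t) hy]

lemma hasGoodMove_fineWeight {t : α} (hN : IsTriangular N) (hdeg : ∀ v, residualDegree N S v ≤ 4)
    (ht : t ∉ S) : HasGoodMove N fineWeight S := by
  by_contra hno
  have hwhite3 : ∀ v ∉ S, residualDegree N S v ≤ 3 := fun v hv =>
    Nat.lt_succ_iff.1 (not_le.1 fun h => hno (hasGoodMove_of_four_le_of_notMem hN hdeg hv h))
  have hdeg3 : ∀ v, residualDegree N S v ≤ 3 := fun v =>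
    if hv : v ∈ S then
      Nat.lt_succ_iff.1 (not_le.1 fun h => hno (hasGoodMove_of_four_le_of_mem hN hwhite3 hv h))
    else hwhite3 v hv
  have hwhite2 : ∀ v ∉ S, residualDegree N S v ≤ 2 := fun v hv =>
    Nat.lt_succ_iff.1 (not_le.1 fun h => hno (hasGoodMove_of_three_le_of_notMem hN hdeg3 hv h))
  have hdeg2 : ∀ v, residualDegree N S v ≤ 2 := fun v =>
    if hv : v ∈ S then Nat.lt_succ_iff.1 (not_le.1 fun h =>
      hno (hasGoodMove_of_three_le_of_mem hN hdeg3 hwhite2 hv h))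
    else hwhite2 v hv
  exact hno (hasGoodMove_of_isClustered hN (isClustered_of_not_hasGoodMove hN hdeg2 hno) ht)

end Clusters

section Game

open Finset

variable [Fintype V] {H : Finset (Finset V)} {S : Finset V} {x : V} {b : ℕ → ℕ}

lemma domGameVal_true_le (hx : ¬ closedNbhd H x ⊆ S) :
    domGameVal H true S ≤ 1 + domGameVal H false (S ∪ closedNbhd H x) := by
  have hmem : x ∈ univ.filter fun v => ¬ closedNbhd H v ⊆ S := mem_filter.2 ⟨mem_univ x, hx⟩
  rw [domGameVal, dif_pos ⟨x, hmem⟩, if_pos rfl]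
  exact Nat.add_le_add_left (inf'_le
    (fun v : {v // v ∈ univ.filter fun v => ¬ closedNbhd H v ⊆ S} =>
      domGameVal H false (S ∪ closedNbhd H v.1)) (mem_attach _ ⟨x, hmem⟩)) 1

lemma domGameVal_false_eq_zero_or (H : Finset (Finset V)) (S : Finset V) :
    domGameVal H false S = 0 ∨ ∃ y, ¬ closedNbhd H y ⊆ S ∧
      domGameVal H false S = 1 + domGameVal H true (S ∪ closedNbhd H y) := by
  by_cases hmove : (univ.filter fun v => ¬ closedNbhd H v ⊆ S).Nonempty
  · obtain ⟨y, -, hy⟩ := exists_mem_eq_sup' (attach_nonempty_iff.2 hmove)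
      fun v : {v // v ∈ univ.filter fun v => ¬ closedNbhd H v ⊆ S} =>
        domGameVal H true (S ∪ closedNbhd H v.1)
    refine Or.inr ⟨y.1, (mem_filter.1 y.2).2, ?_⟩
    rw [domGameVal, dif_pos hmove, if_neg Bool.false_ne_true, hy]
  · rw [domGameVal, dif_neg hmove]
    exact Or.inl rfl

lemma domGameVal_univ (H : Finset (Finset V)) (dom : Bool) : domGameVal H dom univ = 0 := by
  rw [domGameVal, dif_neg]
  simp

lemma mul_domGameVal_le_potential_of_hasGoodMove (hb : IsDominatedWeight b)
    (hgood : HasGoodMove (closedNbhd H) b S)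
    (ih : ∀ T, S ⊂ T → 27 * domGameVal H true T ≤ potential (closedNbhd H) b T) :
    27 * domGameVal H true S ≤ potential (closedNbhd H) b S := by
  obtain ⟨x, hmove, hround⟩ := hgood
  have hx := not_subset_of_moveGain_pos (hmove.trans_lt' (by norm_num))
  have hdom := domGameVal_true_le hx
  have hlossx := potential_union_add_moveGain (N := closedNbhd H) (S := S) (x := x) hb
  rcases domGameVal_false_eq_zero_or H (S ∪ closedNbhd H x) with hend | ⟨y, hy, hstall⟩
  · omega
  · have hlossy := potential_union_add_moveGain (N := closedNbhd H) (S := S ∪ closedNbhd H x)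
      (x := y) hb
    have hgain := hround y hy
    have hrest := ih (S ∪ closedNbhd H x ∪ closedNbhd H y)
      ((left_lt_sup.2 hx).trans_le subset_union_left)
    omega

lemma mul_domGameVal_le_potential (hb : IsDominatedWeight b)
    (h : ∀ T, S ⊆ T → HasGoodMove (closedNbhd H) b T ∨
      27 * domGameVal H true T ≤ potential (closedNbhd H) b T) :
    27 * domGameVal H true S ≤ potential (closedNbhd H) b S := by
  induction S using WellFoundedGT.induction with
  | ind S ih =>
    rcases h S subset_rfl with hgood | hle
    · exact mul_domGameVal_le_potential_of_hasGoodMove hb hgood fun T hST =>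
        ih T hST fun U hTU => h U (hST.subset.trans hTU)
    · exact hle

lemma mul_domGameVal_le_potential_fineWeight (hN : IsTriangular (closedNbhd H))
    (hdeg : ∀ v, residualDegree (closedNbhd H) S v ≤ 4) :
    27 * domGameVal H true S ≤ potential (closedNbhd H) fineWeight S := by
  refine mul_domGameVal_le_potential isDominatedWeight_fineWeight fun T hST => ?_
  by_cases hT : ∃ t, t ∉ T
  · obtain ⟨t, ht⟩ := hT
    exact Or.inl
      (hasGoodMove_fineWeight hN (fun v => (residualDegree_anti hST v).trans (hdeg v)) ht)
  · rw [eq_univ_iff_forall.2 (not_exists_not.1 hT), domGameVal_univ]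
    exact Or.inr (Nat.zero_le _)

lemma potential_fineWeight_le_potential_coarseWeight {α : Type*} [Fintype α] (N : α → Finset α)
    (S : Finset α) : potential N fineWeight S ≤ potential N coarseWeight S := by
  refine sum_le_sum fun v _ => ?_
  unfold vertexWeight
  split_ifs
  · exact fineWeight_le_coarseWeight _
  · exact le_rfl

lemma mul_domGameVal_le_potential_coarseWeight (hN : IsTriangular (closedNbhd H))
    (S : Finset V) :
    27 * domGameVal H true S ≤ potential (closedNbhd H) coarseWeight S := by
  refine mul_domGameVal_le_potential isDominatedWeight_coarseWeight fun T _ => ?_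
  by_cases hdeg : ∃ x, 5 ≤ residualDegree (closedNbhd H) T x
  · obtain ⟨x, hx⟩ := hdeg
    exact Or.inl (hasGoodMove_coarseWeight hN hx)
  · exact Or.inr ((mul_domGameVal_le_potential_fineWeight hN fun v =>
      Nat.lt_succ_iff.1 (not_le.1 fun hv => hdeg ⟨v, hv⟩)).trans
        (potential_fineWeight_le_potential_coarseWeight _ T))

lemma potential_empty {α : Type*} [Fintype α] (N : α → Finset α) (b : ℕ → ℕ) :
    potential N b ∅ = 15 * Fintype.card α := by
  simp [potential, vertexWeight, mul_comm]

lemma mem_closedNbhd {u v : V} :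
    u ∈ closedNbhd H v ↔ u = v ∨ ∃ e ∈ H, u ∈ e ∧ v ∈ e := by
  simp [closedNbhd]

lemma isTriangular_closedNbhd (hisol : ∀ v : V, ∃ u : V, u ≠ v ∧ ∃ e ∈ H, u ∈ e ∧ v ∈ e)
    (hedge : ∀ e ∈ H, 3 ≤ #e) : IsTriangular (closedNbhd H) where
  mem_self v := mem_closedNbhd.2 (Or.inl rfl)
  symm h := mem_closedNbhd.2 <| (mem_closedNbhd.1 h).imp Eq.symm
    fun ⟨e, he, hu, hv⟩ => ⟨e, he, hv, hu⟩
  exists_ne v :=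
    have ⟨u, hne, hadj⟩ := hisol v
    ⟨u, mem_closedNbhd.2 (Or.inr hadj), hne⟩
  exists_common {u v} h hne := by
    obtain ⟨e, he, hu, hv⟩ := (mem_closedNbhd.1 h).resolve_left hne
    obtain ⟨w, hw, hwuv⟩ := exists_mem_notMem_of_card_lt_card
      ((card_le_two (a := u) (b := v)).trans_lt (hedge e he))
    obtain ⟨hwu, hwv⟩ : w ≠ u ∧ w ≠ v := by simpa using hwuv
    exact ⟨w, mem_closedNbhd.2 (Or.inr ⟨e, he, hw, hu⟩),
      mem_closedNbhd.2 (Or.inr ⟨e, he, hw, hv⟩), hwu, hwv⟩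

end Game

theorem stmt_15_general (V : Type) [Fintype V] (H : Finset (Finset V))
    (hN : IsTriangular (closedNbhd H)) : (gammaGame H : ℝ) ≤ 5 / 9 * Fintype.card V := by
  have hgame : 27 * gammaGame H ≤ 15 * Fintype.card V :=
    (mul_domGameVal_le_potential_coarseWeight hN ∅).trans_eq (potential_empty _ _)
  have hreal : (27 : ℝ) * gammaGame H ≤ 15 * Fintype.card V := mod_cast hgame
  linarith

/-- if `H` is a hypergraph on `n` vertices with no isolated vertices in
which every edge has at least three vertices, then `γ_g(H) ≤ (5/9) n`. -/
theorem stmt_15 (V : Type) [Fintype V] (H : Finset (Finset V))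
    (hisol : ∀ v : V, ∃ u : V, u ≠ v ∧ ∃ e ∈ H, u ∈ e ∧ v ∈ e)
    (hedge : ∀ e ∈ H, 3 ≤ e.card) :
    (gammaGame H : ℝ) ≤ 5 / 9 * Fintype.card V :=
  stmt_15_general V H (isTriangular_closedNbhd hisol hedge)
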